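/- Let G ↷ (X, μ) be a pmp action of a countable group, let ξ be a countable collection of Borel subsets of X, let F be a countably generated G-invariant sub-σ-algebra, and suppose x ↦ π_x is an ergodic decomposition map for μ with τ = π_*μ. Then rh_{G,μ}(ξ | F) = ∫ rh_{G,ν}(ξ | F) dτ(ν), where the integrand agrees τ-almost-everywhere with a Borel function and the integral is valued in [0, ∞]. -/

import Mathlib

open MeasureTheory Set Function
open scoped ENNReal symmDiff

/-- A set in a measurable space is *analytic* if it is the image of a Borel subset of a
standard Borel space under a Borel (measurable) map. -/
def IsAnalyticS {W : Type*} [MeasurableSpace W] (A : Set W) : Prop :=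
  ∃ (Z : Type) (mZ : MeasurableSpace Z), @StandardBorelSpace Z mZ ∧
    ∃ (B : Set Z) (f : Z → W), MeasurableSet[mZ] B ∧ @Measurable Z W mZ _ f ∧ f '' B = A

/-- The smallest `G`-invariant sub-σ-algebra containing the collection `ξ`. -/
def sigmaG (G : Type*) {X : Type*} [Group G] [MulAction G X] (ξ : Set (Set X)) :
    MeasurableSpace X :=
  MeasurableSpace.generateFrom {B | ∃ (g : G), ∃ A ∈ ξ, B = (fun x => g • x) ⁻¹' A}

/-- The σ-algebra of `G`-invariant measurable sets. -/
def invSigma (G X : Type*) [Group G] [MulAction G X] [MeasurableSpace X] :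
    MeasurableSpace X :=
  MeasurableSpace.generateFrom {A | MeasurableSet A ∧ ∀ g : G, (fun x => g • x) ⁻¹' A = A}

/-- Conditional Shannon entropy `H_μ(α | m)` of a countable partition `α` given a
sub-σ-algebra `m`, valued in `[0,∞]`. -/
noncomputable def condEnt {X : Type*} (m : MeasurableSpace X) [mX : MeasurableSpace X]
    (μ : Measure X) {ι : Type*} (α : ι → Set X) : ℝ≥0∞ :=
  ∫⁻ x, ∑' i, ENNReal.ofReal
    (Real.negMulLog ((μ[(α i).indicator (fun _ => (1 : ℝ)) | m]) x)) ∂μ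

/-- Shannon entropy `H_μ(α)` of a countable partition. -/
noncomputable def shEnt {X : Type*} [MeasurableSpace X] (μ : Measure X)
    {ι : Type*} (α : ι → Set X) : ℝ≥0∞ :=
  ∑' i, ENNReal.ofReal (Real.negMulLog (μ (α i)).toReal)

/-- `α` is a countable Borel partition of `X` (indexed by `ℕ`, cells may be empty). -/
def IsPartition {X : Type*} [MeasurableSpace X] (α : ℕ → Set X) : Prop :=
  (∀ i, MeasurableSet (α i)) ∧ Pairwise (Function.onFun Disjoint α) ∧ (⋃ i, α i) = univ

/-- Every set of `ξ` agrees with an `m`-measurable set modulo `μ`-null sets. -/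
def SubsetMod {X : Type*} (m : MeasurableSpace X) [mX : MeasurableSpace X] (μ : Measure X)
    (ξ : Set (Set X)) : Prop :=
  ∀ A ∈ ξ, ∃ B, MeasurableSet[m] B ∧ μ (A ∆ B) = 0

/-- Outer Rokhlin entropy `rh_{G,μ}(ξ | F)`. -/
noncomputable def outerRokhlin (G : Type*) {X : Type*} (ξ : Set (Set X))
    (F : MeasurableSpace X) [Group G] [MulAction G X] [mX : MeasurableSpace X]
    (μ : Measure X) : ℝ≥0∞ :=
  sInf { h | ∃ α : ℕ → Set X, IsPartition α ∧
      SubsetMod (sigmaG G (Set.range α) ⊔ F ⊔ invSigma G X) μ ξ ∧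
      h = condEnt (F ⊔ invSigma G X) μ α }

/-- Rokhlin entropy `rh_G(X, μ | F)`. -/
noncomputable def rokhlin (G : Type*) {X : Type*} (F : MeasurableSpace X) [Group G]
    [MulAction G X] [mX : MeasurableSpace X] (μ : Measure X) : ℝ≥0∞ :=
  outerRokhlin G {A | MeasurableSet A} F μ

/-- Outer Rokhlin entropy `rh_{G,μ}(S | F)` of a sub-σ-algebra `S`. -/
noncomputable def outerRokhlinAlg (G : Type*) {X : Type*} (S F : MeasurableSpace X) [Group G]
    [MulAction G X] [mX : MeasurableSpace X] (μ : Measure X) : ℝ≥0∞ :=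
  outerRokhlin G {A | MeasurableSet[S] A} F μ

/-- The action of `G` on `(X, μ)` is probability-measure-preserving. -/
def IsPmp (G : Type*) {X : Type*} [Group G] [MulAction G X] [MeasurableSpace X]
    (μ : Measure X) : Prop :=
  ∀ g : G, MeasurePreserving (fun x => g • x) μ μ

/-- Aperiodicity: μ-almost-every `G`-orbit is infinite. -/
def Aperiodic (G : Type*) {X : Type*} [Group G] [MulAction G X] [MeasurableSpace X]
    (μ : Measure X) : Prop :=
  ∀ᵐ x ∂μ, (MulAction.orbit G x).Infinite

/-- Ergodicity of a measure: every invariant Borel set is null or conull. -/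
def IsErgodicInv (G : Type*) {X : Type*} [Group G] [MulAction G X] [MeasurableSpace X]
    (ν : Measure X) : Prop :=
  ∀ A : Set X, MeasurableSet A → (∀ g : G, (fun x => g • x) ⁻¹' A = A) → ν A = 0 ∨ ν A = 1

/-- `F` is a `G`-invariant σ-algebra. -/
def InvariantAlg (G : Type*) {X : Type*} (F : MeasurableSpace X) [Group G] [MulAction G X] :
    Prop :=
  ∀ (g : G) (A : Set X), MeasurableSet[F] A → MeasurableSet[F] ((fun x => g • x) ⁻¹' A)

/-- `F` is countably generated. -/
def CountablyGen {X : Type*} (F : MeasurableSpace X) : Prop :=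
  ∃ S : Set (Set X), S.Countable ∧ F = MeasurableSpace.generateFrom S

/-- `π` is an ergodic decomposition map for `μ`. -/
def IsErgDecomp (G : Type*) {X : Type*} [Group G] [MulAction G X] [MeasurableSpace X]
    (μ : Measure X) (π : X → Measure X) : Prop :=
  Measurable π ∧
  (∀ x, IsProbabilityMeasure (π x) ∧ IsPmp G (π x) ∧ IsErgodicInv G (π x)) ∧
  (∀ (g : G) (x : X), π (g • x) = π x) ∧
  (∀ ν : Measure X, IsProbabilityMeasure ν → IsPmp G ν → IsErgodicInv G ν →
      ν {x | π x = ν} = 1) ∧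
  (∀ B : Set X, MeasurableSet B → μ B = ∫⁻ x, π x B ∂μ)

/-!
Call the entropy `H_ν(α | F)` of the fibre partition `α` of `f : X → ℕ` the cost of `f` at `ν` if
`α` generates `ξ` over `F` modulo `ν`, and let the cost be `∞` otherwise; outer Rokhlin entropy is
the infimum of the costs. Since the ergodic component `π x` is a function of the invariant
σ-algebra, which is trivial modulo each `π x`, conditional probabilities given `F ∨ I_G` have
versions common to all components. Therefore the cost of `f` at `μ` is the integral of its costs at
the `π x`, and it remains to exchange infimum and integral.

For this, the functions `X → ℕ`, modulo null sets and for all measures at once, are coded by the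
points `p` of the Baire space, and the cost of `c p` at `ν` is jointly measurable in `(ν, p)`. A
measurable selection of `ε`-optimal codes `s (π x)` then glues to the single function
`x ↦ c (s (π x)) x`, which is `ε`-optimal at almost every component because `π` is almost everywhere
constant on each of them.

Measurable sections exist almost everywhere because, up to `ε` in measure, the range of a continuous
map on `ℕ → ℕ` is the image of a compact box, on which the least preimage, after parametrization by
the Cantor set, is measurable.
-/

section AeSections

variable {Y : Type*} [TopologicalSpace Y] [TopologicalSpace.MetrizableSpace Y]
  [MeasurableSpace Y] [BorelSpace Y]

theorem exists_measure_image_le_add {α Y : Type*} [MeasurableSpace Y] (τ : Measure Y)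
    [IsFiniteMeasure τ] (φ : α → Y) (c : α → ℕ) (S : Set α) {δ : ℝ≥0∞} (hδ : δ ≠ 0) :
    ∃ N, τ (φ '' S) ≤ τ (φ '' (S ∩ {x | c x ≤ N})) + δ := by
  have hmono : Monotone fun N => φ '' (S ∩ {x | c x ≤ N}) := fun a b hab =>
    image_mono fun x hx => ⟨hx.1, hx.2.trans hab⟩
  have hunion : ⋃ N, φ '' (S ∩ {x | c x ≤ N}) = φ '' S := by
    rw [← image_iUnion, ← inter_iUnion, iUnion_eq_univ_iff.2 fun x => ⟨c x, le_refl (c x)⟩,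
      inter_univ]
  by_contra! hlt
  refine (ENNReal.lt_add_right (measure_ne_top τ (φ '' S)) hδ).not_ge ?_
  calc τ (φ '' S) + δ = ⨆ N, (τ (φ '' (S ∩ {x | c x ≤ N})) + δ) := by
        rw [← hunion, hmono.measure_iUnion, ENNReal.iSup_add]
    _ ≤ τ (φ '' S) := iSup_le fun N => (hlt N).le

theorem exists_bound_measure_image_le_add {Y : Type*} [MeasurableSpace Y] (τ : Measure Y)
    [IsFiniteMeasure τ] (φ : (ℕ → ℕ) → Y) {ε : ℝ≥0∞} (hε : ε ≠ 0) :
    ∃ b : ℕ → ℕ, ∀ k, τ (range φ) ≤ τ (φ '' {x | ∀ i < k, x i ≤ b i}) + ε := by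
  obtain ⟨δ, hδ, hδε⟩ := ENNReal.exists_pos_sum_of_countable' hε ℕ
  choose N hN using fun k S => exists_measure_image_le_add τ φ (fun x => x k) S (hδ k).ne'
  let S : ℕ → Set (ℕ → ℕ) := fun k => Nat.rec univ (fun k T => T ∩ {x | x k ≤ N k T}) k
  have hS : ∀ k, S k = {x | ∀ i < k, x i ≤ N i (S i)} := by
    intro k
    induction k with
    | zero => simp [S]
    | succ k ih =>
      have hsucc : S (k + 1) = S k ∩ {x | x k ≤ N k (S k)} := rfl
      rw [hsucc]
      ext x
      rw [mem_inter_iff]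
      nth_rw 1 [ih]
      exact Nat.forall_lt_succ_right.symm
  have hsum : ∀ k, τ (range φ) ≤ τ (φ '' S k) + ∑ i ∈ Finset.range k, δ i := by
    intro k
    induction k with
    | zero => simp [S]
    | succ k ih =>
      calc τ (range φ) ≤ τ (φ '' S k) + ∑ i ∈ Finset.range k, δ i := ih
        _ ≤ τ (φ '' S (k + 1)) + δ k + ∑ i ∈ Finset.range k, δ i := by gcongr; exact hN k (S k)
        _ = τ (φ '' S (k + 1)) + ∑ i ∈ Finset.range (k + 1), δ i := by
          rw [Finset.sum_range_succ, add_assoc, add_comm (δ k)]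
  refine ⟨fun i => N i (S i), fun k => ?_⟩
  rw [← hS]
  exact (hsum k).trans (by gcongr; exact (ENNReal.sum_le_tsum _).trans hδε.le)

theorem exists_cylinder_subset_of_isOpen {b : ℕ → ℕ} {W : Set (ℕ → ℕ)} (hW : IsOpen W)
    (hbW : Iic b ⊆ W) : ∃ k, {x | ∀ i < k, x i ≤ b i} ⊆ W := by
  let _ := PiNat.metricSpaceNatNat
  have hcompact : IsCompact (Iic b) := by rw [← Icc_bot]; exact isCompact_Icc
  obtain ⟨δ, hδ, hδW⟩ := hcompact.exists_thickening_subset_open hW hbW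
  obtain ⟨k, hk⟩ := exists_pow_lt_of_lt_one hδ (by norm_num : (1 / 2 : ℝ) < 1)
  refine ⟨k, fun x hx => hδW (Metric.mem_thickening_iff.2 ⟨x ⊓ b, inf_le_right (a := x), ?_⟩)⟩
  refine (PiNat.mem_cylinder_iff_dist_le.1 ?_).trans_lt hk
  exact fun i hi => (min_eq_left (hx i hi)).symm

theorem exists_measure_range_le_image_Iic_add (τ : Measure Y) [IsFiniteMeasure τ]
    {φ : (ℕ → ℕ) → Y} (hφ : Continuous φ) {ε : ℝ≥0∞} (hε : ε ≠ 0) :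
    ∃ b, τ (range φ) ≤ τ (φ '' Iic b) + ε := by
  have hε' : ε / 2 ≠ 0 := (ENNReal.half_pos hε).ne'
  obtain ⟨b, hb⟩ := exists_bound_measure_image_le_add τ φ hε'
  obtain ⟨U, hUb, hU, hUle⟩ := (φ '' Iic b).exists_isOpen_le_add τ hε'
  obtain ⟨k, hk⟩ := exists_cylinder_subset_of_isOpen (hU.preimage hφ) (image_subset_iff.1 hUb)
  refine ⟨b, ?_⟩
  calc τ (range φ) ≤ τ (φ '' {x | ∀ i < k, x i ≤ b i}) + ε / 2 := hb k
    _ ≤ τ (φ '' Iic b) + ε / 2 + ε / 2 := by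
      gcongr
      exact (measure_mono (image_subset_iff.2 hk)).trans hUle
    _ = τ (φ '' Iic b) + ε := by rw [add_assoc, ENNReal.add_halves]

theorem exists_measurable_section_of_continuousOn_isCompact {K : Set ℝ} (hK : IsCompact K)
    {ψ : ℝ → Y} (hψ : ContinuousOn ψ K) :
    ∃ s : Y → ℝ, Measurable s ∧ ∀ y ∈ ψ '' K, s y ∈ K ∧ ψ (s y) = y := by
  classical
  let fibre : Y → Set ℝ := fun y => K ∩ ψ ⁻¹' {y}
  have hfibre : ∀ y ∈ ψ '' K, sInf (fibre y) ∈ fibre y := by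
    rintro y ⟨r, hr, rfl⟩
    have hcompact : IsCompact (fibre (ψ r)) :=
      hK.of_isClosed_subset (hψ.preimage_isClosed_of_isClosed hK.isClosed isClosed_singleton)
        inter_subset_left
    exact hcompact.sInf_mem ⟨r, hr, rfl⟩
  have himage : ∀ a, MeasurableSet (ψ '' (K ∩ Iic a)) := fun a =>
    ((hK.inter_right isClosed_Iic).image_of_continuousOn (hψ.mono inter_subset_left)).measurableSet
  have hKm : MeasurableSet (ψ '' K) := (hK.image_of_continuousOn hψ).measurableSet
  refine ⟨fun y => sInf (fibre y), measurable_of_Iic fun a => ?_, hfibre⟩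
  have hempty : ∀ y ∉ ψ '' K, fibre y = ∅ := fun y hy =>
    eq_empty_of_forall_notMem fun r hr => hy ⟨r, hr.1, hr.2⟩
  have hpre : (fun y => sInf (fibre y)) ⁻¹' Iic a =
      ψ '' (K ∩ Iic a) ∪ (ψ '' K)ᶜ ∩ {_y | sInf (∅ : Set ℝ) ≤ a} := by
    ext y
    by_cases hy : y ∈ ψ '' K
    · simp only [mem_preimage, mem_Iic, mem_union, mem_inter_iff, mem_compl_iff, hy,
        not_true_eq_false, false_and, or_false]
      refine ⟨fun h => ⟨_, ⟨(hfibre y hy).1, h⟩, (hfibre y hy).2⟩, ?_⟩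
      rintro ⟨r, ⟨hrK, hra⟩, hr⟩
      exact (csInf_le (hK.bddBelow.mono inter_subset_left) ⟨hrK, hr⟩).trans hra
    · have hy' : y ∉ ψ '' (K ∩ Iic a) := fun h => hy (image_mono inter_subset_left h)
      simp [hempty y hy, hy, hy']
  rw [hpre]
  exact (himage a).union (hKm.compl.inter (.const _))

theorem exists_measurable_section_of_compactSpace {Z : Type*} [Nonempty Z] [TopologicalSpace Z]
    [TopologicalSpace.MetrizableSpace Z] [CompactSpace Z] [MeasurableSpace Z] [BorelSpace Z]
    {f : Z → Y} (hf : Continuous f) : ∃ s : Y → Z, Measurable s ∧ ∀ y ∈ range f, f (s y) = y := by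
  let _ := TopologicalSpace.metrizableSpaceMetric Z
  obtain ⟨q, hq, hqsurj⟩ := exists_nat_bool_continuous_surjective_of_compact Z
  let p : cantorSet → Z := q ∘ cantorSetHomeomorphNatToBool
  have hp : Continuous p := hq.comp cantorSetHomeomorphNatToBool.continuous
  have hpsurj : Surjective p := hqsurj.comp cantorSetHomeomorphNatToBool.surjective
  classical
  let g : ℝ → Z := fun r => if h : r ∈ cantorSet then p ⟨r, h⟩ else Classical.arbitrary Z
  have hg : Measurable g :=
    hp.measurable.dite measurable_const isClosed_cantorSet.measurableSet
  have hgp : cantorSet.domRestrict g = p := by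
    ext ⟨r, hr⟩
    exact dif_pos hr
  have hgc : ContinuousOn (f ∘ g) cantorSet :=
    hf.comp_continuousOn (continuousOn_iff_continuous_domRestrict.2 (hgp.symm ▸ hp))
  obtain ⟨s, hs, hfs⟩ := exists_measurable_section_of_continuousOn_isCompact isCompact_cantorSet hgc
  refine ⟨g ∘ s, hg.comp hs, ?_⟩
  rintro _ ⟨z, rfl⟩
  obtain ⟨r, rfl⟩ := hpsurj z
  refine (hfs _ ⟨r, r.2, ?_⟩).2
  exact congrArg f (congrFun hgp r)

theorem exists_measurable_ae_section_of_continuous (τ : Measure Y) [IsFiniteMeasure τ]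
    {φ : (ℕ → ℕ) → Y} (hφ : Continuous φ) :
    ∃ s : Y → ℕ → ℕ, Measurable s ∧ ∀ᵐ y ∂τ, y ∈ range φ → φ (s y) = y := by
  choose b hb using fun n : ℕ =>
    exists_measure_range_le_image_Iic_add τ hφ (ε := ((n : ℝ≥0∞) + 1)⁻¹) (by simp)
  have hcompact : ∀ n, IsCompact (Iic (b n)) := fun n => by rw [← Icc_bot]; exact isCompact_Icc
  have hsection : ∀ n, ∃ s : Y → ℕ → ℕ, Measurable s ∧ ∀ y ∈ φ '' Iic (b n), φ (s y) = y := by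
    intro n
    have := isCompact_iff_compactSpace.1 (hcompact n)
    obtain ⟨s, hs, hφs⟩ := exists_measurable_section_of_compactSpace (Z := Iic (b n))
      (hφ.comp continuous_subtype_val)
    refine ⟨fun y => s y, measurable_subtype_coe.comp hs, fun y hy => hφs y ?_⟩
    rwa [range_comp, Subtype.range_coe]
  choose s hs hφs using hsection
  let E : ℕ → Set Y := fun n => φ '' Iic (b n)
  have hE : ∀ n, MeasurableSet (E n) := fun n =>
    ((hcompact n).image hφ).measurableSet
  obtain ⟨t, ht, hts⟩ := exists_measurable_piecewise (disjointed E) (.disjointed hE) s hs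
    fun m n hmn y hy => ((disjoint_disjointed E hmn).le_bot hy).elim
  refine ⟨t, ht, ?_⟩
  have hrange : ∀ n : ℕ, τ (range φ \ ⋃ n, E n) ≤ ((n : ℝ≥0∞) + 1)⁻¹ := fun n =>
    calc τ (range φ \ ⋃ n, E n) ≤ τ (range φ \ E n) := by
          gcongr; exact subset_iUnion E n
      _ = τ (range φ) - τ (E n) :=
        measure_sdiff (image_subset_range _ _) (hE n).nullMeasurableSet (measure_ne_top _ _)
      _ ≤ ((n : ℝ≥0∞) + 1)⁻¹ := tsub_le_iff_left.2 (hb n)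
  have hnull : τ (range φ \ ⋃ n, E n) = 0 := by
    have hlim : Filter.Tendsto (fun n : ℕ => ((n : ℝ≥0∞) + 1)⁻¹) .atTop (nhds 0) := by
      simpa using (Filter.tendsto_add_atTop_iff_nat 1).2 ENNReal.tendsto_inv_nat_nhds_zero
    exact le_antisymm (ge_of_tendsto' hlim hrange) zero_le
  filter_upwards [measure_eq_zero_iff_ae_notMem.1 hnull] with y hy hyφ
  have hyE : y ∈ ⋃ n, disjointed E n := by
    rw [iUnion_disjointed]
    by_contra h
    exact hy ⟨hyφ, h⟩
  obtain ⟨n, hn⟩ := mem_iUnion.1 hyE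
  rw [hts n hn]
  exact hφs n y (disjointed_subset E n hn)

end AeSections

section StandardBorel

theorem exists_measurable_surjective_continuous_comp {Z Y : Type*} [MeasurableSpace Z]
    [StandardBorelSpace Z] [Nonempty Z] [TopologicalSpace Y] [SecondCountableTopology Y]
    [MeasurableSpace Y] [OpensMeasurableSpace Y] {f : Z → Y} (hf : Measurable f) :
    ∃ ψ : (ℕ → ℕ) → Z, Measurable ψ ∧ Surjective ψ ∧ Continuous (f ∘ ψ) := by
  let polish := upgradeStandardBorel Z
  obtain ⟨topology, hle, hcont, _⟩ := hf.exists_continuous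
  obtain ⟨ψ, hψ, hψsurj⟩ := @PolishSpace.exists_nat_nat_continuous_surjective Z topology _ _
  refine ⟨ψ, ?_, hψsurj, @Continuous.comp _ _ _ _ topology _ _ _ hcont hψ⟩
  have hψ' := continuous_le_rng hle hψ
  let _ := polish.toTopologicalSpace
  exact hψ'.measurable

variable {Z T : Type*} [MeasurableSpace Z] [StandardBorelSpace Z] [MeasurableSpace T]
  [MeasurableSpace.CountablySeparated T] {f : Z → T}

theorem exists_measurable_ae_section [Nonempty Z] (hf : Measurable f) (τ : Measure T)
    [IsFiniteMeasure τ] : ∃ s : T → Z, Measurable s ∧ ∀ᵐ t ∂τ, t ∈ range f → f (s t) = t := by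
  obtain ⟨i, hi, hinj⟩ := MeasurableSpace.measurable_injection_nat_bool_of_countablySeparated T
  obtain ⟨ψ, hψm, hψsurj, hφ⟩ := exists_measurable_surjective_continuous_comp (hi.comp hf)
  obtain ⟨s, hs, hφs⟩ := exists_measurable_ae_section_of_continuous (τ.map i) hφ
  refine ⟨ψ ∘ s ∘ i, hψm.comp (hs.comp hi), ?_⟩
  filter_upwards [ae_of_ae_map hi.aemeasurable hφs] with t ht
  rintro ⟨z, rfl⟩
  obtain ⟨x, rfl⟩ := hψsurj z
  exact hinj (ht ⟨x, rfl⟩)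

theorem nullMeasurableSet_range (hf : Measurable f) (τ : Measure T) [IsFiniteMeasure τ] :
    NullMeasurableSet (range f) τ := by
  cases isEmpty_or_nonempty Z
  · simp [range_eq_empty]
  obtain ⟨s, hs, hfs⟩ := exists_measurable_ae_section hf τ
  obtain ⟨i, hi, hinj⟩ := MeasurableSpace.measurable_injection_nat_bool_of_countablySeparated T
  have hmeas : MeasurableSet {t | i (f (s t)) = i t} :=
    measurableSet_eq_fun (hi.comp (hf.comp hs)) hi
  refine hmeas.nullMeasurableSet.congr ?_
  filter_upwards [hfs] with t ht
  exact propext ⟨fun h => ⟨_, hinj h⟩, fun h => congrArg i (ht h)⟩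

end StandardBorel

section MeasurableOptimization

variable {X P T : Type*} [MeasurableSpace X] [StandardBorelSpace X] [MeasurableSpace P]
  [StandardBorelSpace P] [MeasurableSpace T] [MeasurableSpace.CountablySeparated T] {k : X → T}
  {e : T → P → ℝ≥0∞}

theorem ae_map_mem_range_of_measurable (hk : Measurable k) (μ : Measure X) [IsFiniteMeasure μ] :
    ∀ᵐ t ∂μ.map k, t ∈ range k := by
  have hnull : NullMeasurableSet (range k)ᶜ (μ.map k) := (nullMeasurableSet_range hk _).compl
  rw [ae_iff]
  change μ.map k (range k)ᶜ = 0
  rw [Measure.map_apply₀ hk.aemeasurable hnull, preimage_compl, preimage_range, compl_univ,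
    measure_empty]

theorem aemeasurable_iInf_of_measurable_uncurry (hk : Measurable k) (he : Measurable (uncurry e))
    (μ : Measure X) [IsFiniteMeasure μ] : AEMeasurable (fun t => ⨅ p, e t p) (μ.map k) := by
  refine NullMeasurable.aemeasurable
    ((nullMeasurable_iff_eventuallyMeasurable _).2 (measurable_of_Iio fun r => ?_))
  have hek : Measurable fun z : X × P => e (k z.1) z.2 :=
    he.comp ((hk.comp measurable_fst).prodMk measurable_snd)
  let S : Set (X × P) := {z | e (k z.1) z.2 < r}
  have hS : MeasurableSet S := hek measurableSet_Iio
  have := hS.standardBorel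
  have hrange : NullMeasurableSet (range fun z : S => k z.1.1) (μ.map k) :=
    nullMeasurableSet_range (hk.comp (measurable_fst.comp measurable_subtype_coe)) _
  refine hrange.congr ?_
  filter_upwards [ae_map_mem_range_of_measurable hk μ] with t ht
  obtain ⟨x, rfl⟩ := ht
  refine propext ⟨?_, fun h => ?_⟩
  · rintro ⟨⟨⟨x', p⟩, hp⟩, hx' : k x' = k x⟩
    rw [mem_ofPred_eq, hx'] at hp
    exact (iInf_le _ p).trans_lt hp
  · obtain ⟨p, hp⟩ := iInf_lt_iff.1 (mem_Iio.1 h)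
    exact ⟨⟨(x, p), hp⟩, rfl⟩

theorem exists_measurable_ae_le_iInf_add [Nonempty P] (hk : Measurable k)
    (he : Measurable (uncurry e)) (μ : Measure X) [IsFiniteMeasure μ] {ε : ℝ≥0∞} (hε : ε ≠ 0) :
    ∃ s : T → P, Measurable s ∧ ∀ᵐ t ∂μ.map k, e t (s t) ≤ (⨅ p, e t p) + ε := by
  have hinf := aemeasurable_iInf_of_measurable_uncurry hk he μ
  have hek : Measurable fun z : X × P => e (k z.1) z.2 :=
    he.comp ((hk.comp measurable_fst).prodMk measurable_snd)
  let S : Set (X × P) := {z | e (k z.1) z.2 ≤ hinf.mk _ (k z.1) + ε}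
  have hS : MeasurableSet S := measurableSet_le hek
    ((hinf.measurable_mk.comp (hk.comp measurable_fst)).add measurable_const)
  have hSrange : ∀ᵐ t ∂μ.map k, t ∈ range fun z : S => k z.1.1 := by
    filter_upwards [ae_map_mem_range_of_measurable hk μ, hinf.ae_eq_mk] with t ht htinf
    obtain ⟨x, rfl⟩ := ht
    obtain ⟨p, hp⟩ : ∃ p, e (k x) p ≤ (⨅ p, e (k x) p) + ε := by
      by_cases htop : (⨅ p, e (k x) p) = ∞
      · exact ⟨Classical.arbitrary P, by simp [htop]⟩
      · obtain ⟨p, hp⟩ := iInf_lt_iff.1 (ENNReal.lt_add_right htop hε)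
        exact ⟨p, hp.le⟩
    exact ⟨⟨(x, p), hp.trans_eq (by rw [htinf])⟩, rfl⟩
  rcases isEmpty_or_nonempty S with hempty | hnonempty
  · exact ⟨fun _ => Classical.arbitrary P, measurable_const, by
      filter_upwards [hSrange] with t ⟨z, _⟩ using hempty.elim z⟩
  have := hS.standardBorel
  obtain ⟨s, hs, hsection⟩ := exists_measurable_ae_section
    (f := fun z : S => k z.1.1) (hk.comp (measurable_fst.comp measurable_subtype_coe)) (μ.map k)
  refine ⟨fun t => (s t).1.2, measurable_snd.comp (measurable_subtype_coe.comp hs), ?_⟩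
  filter_upwards [hSrange, hsection, hinf.ae_eq_mk] with t ht hst htinf
  have hmem := (s t).2
  simp only [S, mem_ofPred_eq, hst ht] at hmem
  rwa [htinf]

end MeasurableOptimization

section Coding

theorem countablySeparated_of_measurable_injective {T S : Type*} [MeasurableSpace T]
    [MeasurableSpace S] [MeasurableSpace.CountablySeparated S] {i : T → S} (hi : Measurable i)
    (hinj : Injective i) : MeasurableSpace.CountablySeparated T := by
  obtain ⟨C, hcount, hmeas, hsep⟩ := exists_countable_separating S MeasurableSet univ
  refine ⟨⟨preimage i '' C, hcount.image _, ?_, fun x _ y _ h => hinj ?_⟩⟩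
  · rintro _ ⟨A, hA, rfl⟩
    exact hi (hmeas A hA)
  · exact hsep _ trivial _ trivial fun A hA => h _ ⟨A, hA, rfl⟩

variable {X : Type*} [mX : MeasurableSpace X]

theorem exists_ae_frequently_mem_iff {a : ℕ → Set X} (halg : IsSetAlgebra (range a))
    (hgen : MeasurableSpace.generateFrom (range a) = mX) (ν : Measure X) [IsFiniteMeasure ν]
    {A : Set X} (hA : MeasurableSet A) :
    ∃ q : ℕ → ℕ, ∀ᵐ x ∂ν, (∃ᶠ k in .atTop, x ∈ a (q k)) ↔ x ∈ A := by
  have happrox : ∀ k : ℕ, ∃ j, ν (a j ∆ A) < 2⁻¹ ^ k := by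
    intro k
    obtain ⟨_, ⟨j, rfl⟩, hj⟩ := exists_measure_symmDiff_lt_of_generateFrom_isSetRing (μ := ν)
      halg.isSetRing ⟨{univ}, countable_singleton _, singleton_subset_iff.2 halg.univ_mem,
        by rw [sUnion_singleton, compl_univ, measure_empty]⟩
      hgen.symm hA (ε := (2⁻¹ : ℝ≥0∞) ^ k)
      (ENNReal.pow_pos (ENNReal.inv_pos.2 ENNReal.ofNat_ne_top) k)
    exact ⟨j, hj⟩
  choose q hq using happrox
  have hsum : ∑' k, ν (a (q k) ∆ A) ≠ ∞ := by
    refine ne_top_of_le_ne_top ?_ (ENNReal.tsum_le_tsum fun k => (hq k).le)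
    rw [ENNReal.tsum_geometric, ENNReal.one_sub_inv_two, inv_inv]
    exact ENNReal.ofNat_ne_top
  refine ⟨q, ?_⟩
  filter_upwards [ae_eventually_notMem hsum] with x hx
  have hiff : ∀ᶠ k in .atTop, (x ∈ a (q k) ↔ x ∈ A) := by
    filter_upwards [hx] with k hk
    rw [mem_symmDiff] at hk
    tauto
  rw [Filter.frequently_congr hiff, Filter.frequently_const]

variable [MeasurableSpace.CountablyGenerated X]

variable (X) in
theorem exists_isSetAlgebra_range_generateFrom_eq :
    ∃ a : ℕ → Set X, IsSetAlgebra (range a) ∧ MeasurableSpace.generateFrom (range a) = mX := by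
  let C := generateSetAlgebra (MeasurableSpace.countableGeneratingSet X)
  have halg : IsSetAlgebra C := isSetAlgebra_generateSetAlgebra
  have hcount : C.Countable :=
    countable_generateSetAlgebra MeasurableSpace.countable_countableGeneratingSet
  obtain ⟨a, ha⟩ := hcount.exists_eq_range ⟨∅, halg.empty_mem⟩
  refine ⟨a, ha ▸ halg, ?_⟩
  rw [← ha, generateFrom_generateSetAlgebra_eq, MeasurableSpace.generateFrom_countableGeneratingSet]

variable (X) in
theorem exists_measurableSet_prod_forall_exists_ae_mem_iff :
    ∃ U : Set ((ℕ → ℕ) × X), MeasurableSet U ∧ ∀ (ν : Measure X) [IsFiniteMeasure ν] (A : Set X),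
      MeasurableSet A → ∃ q, ∀ᵐ x ∂ν, (q, x) ∈ U ↔ x ∈ A := by
  obtain ⟨a, halg, hgen⟩ := exists_isSetAlgebra_range_generateFrom_eq X
  have ha : ∀ j, MeasurableSet (a j) := fun j => by
    rw [← hgen]
    exact MeasurableSpace.measurableSet_generateFrom (mem_range_self j)
  let E : ℕ → Set ((ℕ → ℕ) × X) := fun k => {w | w.2 ∈ a (w.1 k)}
  have hE : ∀ k, MeasurableSet (E k) := by
    intro k
    have hunion : E k = ⋃ j, (fun w : (ℕ → ℕ) × X => w.1 k) ⁻¹' {j} ∩ Prod.snd ⁻¹' a j := by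
      ext w
      simp [E]
    rw [hunion]
    refine .iUnion fun j => .inter ?_ (measurable_snd (ha j))
    have hk : Measurable fun w : (ℕ → ℕ) × X => w.1 k := by fun_prop
    exact hk (measurableSet_singleton j)
  refine ⟨Filter.limsup E .atTop, .measurableSet_limsup hE, fun ν _ A hA => ?_⟩
  obtain ⟨q, hq⟩ := exists_ae_frequently_mem_iff halg hgen ν hA
  exact ⟨q, by simpa only [Filter.mem_limsup_iff_frequently_mem, E, mem_ofPred_eq] using hq⟩

variable (X) in
theorem exists_measurable_uncurry_forall_exists_ae_eq (Y : Type*) [MeasurableSpace Y]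
    [StandardBorelSpace Y] [Nonempty Y] :
    ∃ c : (ℕ → ℕ → ℕ) → X → Y, Measurable (uncurry c) ∧
      ∀ (ν : Measure X) [IsFiniteMeasure ν] (f : X → Y), Measurable f → ∃ p, c p =ᵐ[ν] f := by
  classical
  obtain ⟨U, hU, hcode⟩ := exists_measurableSet_prod_forall_exists_ae_mem_iff X
  let i : Y → ℕ → Bool := MeasurableSpace.mapNatBool Y
  have hi : MeasurableEmbedding i := (MeasurableSpace.measurable_mapNatBool Y).measurableEmbedding
    (MeasurableSpace.injective_mapNatBool Y)
  refine ⟨fun p x => hi.invFun fun n => decide ((p n, x) ∈ U), ?_, fun ν _ f hf => ?_⟩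
  · refine hi.measurable_invFun.comp (measurable_pi_lambda _ fun n => measurable_to_bool ?_)
    have hn : Measurable fun w : (ℕ → ℕ → ℕ) × X => (w.1 n, w.2) := by fun_prop
    convert hn hU using 1
    ext w
    simp
  · choose p hp using fun n => hcode ν {x | i (f x) n = true}
      (((measurable_pi_apply n).comp (hi.measurable.comp hf)) (measurableSet_singleton true))
    refine ⟨p, ?_⟩
    filter_upwards [ae_all_iff.2 hp] with x hx
    have hbits : (fun n => decide ((p n, x) ∈ U)) = i (f x) := by
      ext n
      simp [hx n]
    rw [hbits, hi.leftInverse_invFun]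

instance countablySeparated_probabilityMeasure :
    MeasurableSpace.CountablySeparated (ProbabilityMeasure X) := by
  obtain ⟨a, halg, hgen⟩ := exists_isSetAlgebra_range_generateFrom_eq X
  have ha : ∀ j, MeasurableSet (a j) := fun j => by
    rw [← hgen]
    exact MeasurableSpace.measurableSet_generateFrom (mem_range_self j)
  let i : ProbabilityMeasure X → ℕ → ℝ≥0∞ := fun ν j => (ν : Measure X) (a j)
  have hi : Measurable i :=
    measurable_pi_lambda _ fun j => (Measure.measurable_coe (ha j)).comp measurable_subtype_coe
  have hinj : Injective i := fun ν ν' h => Subtype.ext <|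
    have := ν.2
    ext_of_generate_finite _ hgen.symm (fun _ hs _ ht _ => halg.inter_mem hs ht)
      (by rintro _ ⟨j, rfl⟩; exact congrFun h j) (by simp)
  exact countablySeparated_of_measurable_injective hi hinj

end Coding

section ConditionalExpectation

open ProbabilityTheory

variable {X : Type*} {m m' : MeasurableSpace X} [mX : MeasurableSpace X] {ν : Measure X}

theorem exists_kernel_forall_condExp_ae_eq {T Γ : Type*} [MeasurableSpace T]
    [StandardBorelSpace X] [Nonempty X] [mΓ : MeasurableSpace Γ]
    [MeasurableSpace.CountablyGenerated Γ] (κ : Kernel T X) [IsFiniteKernel κ] {θ : T → X → Γ}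
    (hθ : Measurable (uncurry θ)) :
    ∃ K : Kernel (T × Γ) X, IsMarkovKernel K ∧ ∀ t A, MeasurableSet A →
      (κ t)⟦A | mΓ.comap (θ t)⟧ =ᵐ[κ t] fun x => (K (t, θ t x)).real A := by
  let joint : Kernel T (Γ × X) := (Kernel.id ×ₖ κ).map fun q => (θ q.1 q.2, q.2)
  have hpair : Measurable fun q : T × X => (θ q.1 q.2, q.2) := hθ.prodMk measurable_snd
  have hθt : ∀ t, Measurable (θ t) := fun t => hθ.comp measurable_prodMk_left
  have hjoint : ∀ t, joint t = (κ t).map fun x => (θ t x, x) := fun t => by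
    rw [Kernel.map_apply _ hpair, Kernel.prod_apply, Kernel.id_apply, Measure.dirac_prod,
      Measure.map_map hpair measurable_prodMk_left]
    rfl
  have hfst : ∀ t, joint.fst t = (κ t).map (θ t) := fun t => by
    rw [Kernel.fst_apply, hjoint, Measure.map_map measurable_fst ((hθt t).prodMk measurable_id')]
    rfl
  refine ⟨joint.condKernel, inferInstance, fun t A hA => ?_⟩
  let K := joint.condKernel.sectR t
  have hdisintegrate : (κ t).map (fun x => (θ t x, x)) = (κ t).map (θ t) ⊗ₘ K := by
    rw [← hjoint, ← hfst, ← Kernel.compProd_apply_eq_compProd_sectR, joint.disintegrate]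
  have hcond : condDistrib id (θ t) (κ t) =ᵐ[(κ t).map (θ t)] K :=
    condDistrib_ae_eq_of_measure_eq_compProd (θ t) aemeasurable_id hdisintegrate
  filter_upwards [condDistrib_ae_eq_condExp (hθt t) measurable_id hA,
    ae_of_ae_map (hθt t).aemeasurable hcond] with x hx hxK
  rw [preimage_id] at hx
  rw [← hx, hxK]
  rfl

theorem condExp_ae_eq_of_le_eventuallyMeasurableSpace [IsFiniteMeasure ν] (hmm' : m ≤ m')
    (hm' : m' ≤ mX) (hnull : m' ≤ eventuallyMeasurableSpace m (ae ν)) {f : X → ℝ}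
    (hf : Integrable f ν) : ν[f | m'] =ᵐ[ν] ν[f | m] := by
  refine (ae_eq_condExp_of_forall_setIntegral_eq hm' hf
    (fun _ _ _ => integrable_condExp.integrableOn) (fun s hs _ => ?_)
    (stronglyMeasurable_condExp.mono hmm').aestronglyMeasurable).symm
  obtain ⟨t, ht, hst⟩ := hnull s hs
  rw [setIntegral_congr_set hst, setIntegral_congr_set hst]
  exact setIntegral_condExp (hmm'.trans hm') hf ht

theorem exists_measure_symmDiff_eq_zero_iff_condExp_ae_eq [IsFiniteMeasure ν] (hm : m ≤ mX)
    {A : Set X} :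
    (∃ B, MeasurableSet[m] B ∧ ν (A ∆ B) = 0) ↔ ν⟦A | m⟧ =ᵐ[ν] A.indicator fun _ => 1 := by
  constructor
  · rintro ⟨B, hB, hAB⟩
    have hind : A.indicator (fun _ => (1 : ℝ)) =ᵐ[ν] B.indicator fun _ => 1 :=
      indicator_ae_eq_of_ae_eq_set (measure_symmDiff_eq_zero_iff.1 hAB)
    refine (condExp_congr_ae hind).trans ?_
    rw [condExp_of_stronglyMeasurable hm (stronglyMeasurable_const.indicator hB)
      ((integrable_const (1 : ℝ)).indicator (hm B hB))]
    exact hind.symm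
  · intro h
    refine ⟨(ν⟦A | m⟧) ⁻¹' {1},
      stronglyMeasurable_condExp.measurable (measurableSet_singleton (1 : ℝ)),
      measure_symmDiff_eq_zero_iff.2 ?_⟩
    filter_upwards [h] with x hx
    refine propext (?_ : x ∈ A ↔ (ν⟦A | m⟧) x = 1)
    by_cases hxA : x ∈ A <;> simp [hx, hxA]

theorem condExp_comp_ae_eq {T : Type*} [MeasurableSpace T] (κ : Kernel T X) [IsFiniteKernel κ]
    (μ : Measure T) [IsFiniteMeasure μ] (hm : m ≤ mX) {f g : X → ℝ}
    (hf : Integrable f (κ ∘ₘ μ)) (hg : StronglyMeasurable[m] g)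
    (hfg : ∀ᵐ t ∂μ, (κ t)[f | m] =ᵐ[κ t] g) : (κ ∘ₘ μ)[f | m] =ᵐ[κ ∘ₘ μ] g := by
  have hgm : StronglyMeasurable g := hg.mono hm
  obtain ⟨hft, hfint⟩ := (Measure.integrable_comp_iff hf.aestronglyMeasurable).1 hf
  have hgint : Integrable g (κ ∘ₘ μ) := by
    refine (Measure.integrable_comp_iff hgm.aestronglyMeasurable).2 ⟨?_, hfint.mono' ?_ ?_⟩
    · filter_upwards [hfg] with t ht using integrable_condExp.congr ht
    · exact (hgm.norm.integral_kernel (κ := κ)).aestronglyMeasurable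
    · filter_upwards [hfg] with t ht
      rw [Real.norm_of_nonneg (by positivity)]
      calc ∫ x, ‖g x‖ ∂κ t = ∫ x, ‖((κ t)[f | m]) x‖ ∂κ t :=
            integral_congr_ae (ht.symm.fun_comp norm)
        _ ≤ ∫ x, ‖f x‖ ∂κ t := integral_norm_condExp_le f
  refine (ae_eq_condExp_of_forall_setIntegral_eq hm hf (fun _ _ _ => hgint.integrableOn)
    (fun s hs _ => ?_) hg.aestronglyMeasurable).symm
  rw [Measure.comp_eq_comp_const_apply] at hf hgint ⊢
  rw [Kernel.setIntegral_comp (hm s hs) hgint.integrableOn,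
    Kernel.setIntegral_comp (hm s hs) hf.integrableOn, Kernel.const_apply]
  refine integral_congr_ae ?_
  filter_upwards [hfg, hft] with t ht htf
  rw [← setIntegral_condExp hm htf hs]
  exact setIntegral_congr_ae (hm s hs) (ht.mono fun x hx _ => hx.symm)

end ConditionalExpectation

section ConditionalEntropy

open ProbabilityTheory

variable {X ι T : Type*} {m m' : MeasurableSpace X} [mX : MeasurableSpace X] {ν : Measure X}
  [MeasurableSpace T] {κ : Kernel T X}

theorem measurable_iInf_prop {p : T → Prop}
    (hp : MeasurableSet {t | p t}) {e : T → ℝ≥0∞} (he : Measurable e) :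
    Measurable fun t => ⨅ _ : p t, e t := by
  classical
  simp only [iInf_eq_if]
  exact he.ite hp measurable_const

theorem lintegral_iInf_prop {μ : Measure T} {p : T → Prop} (hp : MeasurableSet {t | p t})
    {e : T → ℝ≥0∞} (he : Measurable e) :
    ∫⁻ t, ⨅ _ : p t, e t ∂μ = ⨅ _ : ∀ᵐ t ∂μ, p t, ∫⁻ t, e t ∂μ := by
  by_cases h : ∀ᵐ t ∂μ, p t
  · rw [iInf_pos h]
    refine lintegral_congr_ae ?_
    filter_upwards [h] with t ht using iInf_pos ht
  · rw [iInf_neg h]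
    by_contra hfin
    refine h ?_
    filter_upwards [ae_lt_top (measurable_iInf_prop hp he) hfin] with t ht
    by_contra hpt
    simp [hpt] at ht

theorem condEnt_eq_lintegral_of_condExp_ae_eq [Countable ι] {α : ι → Set X} {g : ι → X → ℝ}
    (hg : ∀ i, ν⟦α i | m⟧ =ᵐ[ν] g i) :
    condEnt m ν α = ∫⁻ x, ∑' i, ENNReal.ofReal (Real.negMulLog (g i x)) ∂ν := by
  refine lintegral_congr_ae ?_
  filter_upwards [ae_all_iff.2 hg] with x hx
  simp only [hx]

theorem subsetMod_iff_condExp_ae_eq [IsFiniteMeasure ν] (hm : m ≤ mX) {ξ : Set (Set X)} :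
    SubsetMod m ν ξ ↔ ∀ A ∈ ξ, ν⟦A | m⟧ =ᵐ[ν] A.indicator fun _ => 1 :=
  forall₂_congr fun _ _ => exists_measure_symmDiff_eq_zero_iff_condExp_ae_eq hm

theorem measurable_tsum_ofReal_negMulLog [Countable ι] {g : ι → X → ℝ}
    (hg : ∀ i, Measurable (g i)) :
    Measurable fun x => ∑' i, ENNReal.ofReal (Real.negMulLog (g i x)) :=
  Measurable.tsum fun i => (Real.continuous_negMulLog.measurable.comp (hg i)).ennreal_ofReal

theorem measurable_condEnt_of_condExp_ae_eq [Countable ι] [IsSFiniteKernel κ]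
    {m : T → MeasurableSpace X} {α : T → ι → Set X} {g : ι → T → X → ℝ}
    (hg : ∀ i, Measurable (uncurry (g i)))
    (hα : ∀ t i, (κ t)⟦α t i | m t⟧ =ᵐ[κ t] g i t) :
    Measurable fun t => condEnt (m t) (κ t) (α t) := by
  simp only [fun t => condEnt_eq_lintegral_of_condExp_ae_eq (hα t)]
  exact (measurable_tsum_ofReal_negMulLog hg).lintegral_kernel_prod_right'

theorem measurableSet_setOf_subsetMod_of_condExp_ae_eq [IsFiniteKernel κ]
    {m : T → MeasurableSpace X} (hm : ∀ t, m t ≤ mX) {ξ : Set (Set X)} (hξc : ξ.Countable)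
    (hξm : ∀ A ∈ ξ, MeasurableSet A) {g : Set X → T → X → ℝ}
    (hg : ∀ A ∈ ξ, Measurable (uncurry (g A)))
    (hA : ∀ t, ∀ A ∈ ξ, (κ t)⟦A | m t⟧ =ᵐ[κ t] g A t) :
    MeasurableSet {t | SubsetMod (m t) (κ t) ξ} := by
  have hiff : ∀ t, SubsetMod (m t) (κ t) ξ ↔
      ∀ A ∈ ξ, κ t (Prod.mk t ⁻¹' {q | g A q.1 q.2 = A.indicator (fun _ => 1) q.2}ᶜ) = 0 :=
    fun t => (subsetMod_iff_condExp_ae_eq (hm t)).trans <| forall₂_congr fun A hAξ =>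
      ⟨fun h => (hA t A hAξ).symm.trans h, fun h => (hA t A hAξ).trans h⟩
  have hinter : {t | SubsetMod (m t) (κ t) ξ} = ⋂ A ∈ ξ, {t | κ t (Prod.mk t ⁻¹'
      {q | g A q.1 q.2 = A.indicator (fun _ => 1) q.2}ᶜ) = 0} := by
    ext t
    simp only [mem_iInter, mem_ofPred_eq, hiff]
  rw [hinter]
  refine .biInter hξc fun A hAξ => ?_
  have hind : Measurable fun q : T × X => A.indicator (fun _ => (1 : ℝ)) q.2 :=
    (measurable_const.indicator (hξm A hAξ)).comp measurable_snd
  exact Kernel.measurable_kernel_prodMk_left (measurableSet_eq_fun (hg A hAξ) hind).compl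
    (measurableSet_singleton 0)

section Comap

variable {Γ : Type*} [StandardBorelSpace X] [Nonempty X] [mΓ : MeasurableSpace Γ]
  [MeasurableSpace.CountablyGenerated Γ] [IsFiniteKernel κ] {θ : T → X → Γ}

theorem measurable_condEnt_comap (hθ : Measurable (uncurry θ)) {f : T → X → ℕ}
    (hf : Measurable (uncurry f)) :
    Measurable fun t => condEnt (mΓ.comap (θ t)) (κ t) fun i => f t ⁻¹' {i} := by
  obtain ⟨K, _, hcond⟩ := exists_kernel_forall_condExp_ae_eq κ hθ
  refine measurable_condEnt_of_condExp_ae_eq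
    (g := fun i t x => (K (t, θ t x)).real (f t ⁻¹' {i})) (fun i => ?_)
    fun t i => hcond t _ ((hf.comp measurable_prodMk_left) (measurableSet_singleton i))
  have hfibre : MeasurableSet {q : (T × Γ) × X | f q.1.1 q.2 = i} := by
    have hfq : Measurable fun q : (T × Γ) × X => f q.1.1 q.2 :=
      hf.comp ((measurable_fst.comp measurable_fst).prodMk measurable_snd)
    exact hfq (measurableSet_singleton i)
  exact (Kernel.measurable_kernel_prodMk_left hfibre).ennreal_toReal.comp
    (measurable_fst.prodMk hθ)

theorem measurableSet_setOf_subsetMod_comap (hθ : Measurable (uncurry θ)) {ξ : Set (Set X)}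
    (hξc : ξ.Countable) (hξm : ∀ A ∈ ξ, MeasurableSet A) :
    MeasurableSet {t | SubsetMod (mΓ.comap (θ t)) (κ t) ξ} := by
  obtain ⟨K, _, hcond⟩ := exists_kernel_forall_condExp_ae_eq κ hθ
  refine measurableSet_setOf_subsetMod_of_condExp_ae_eq
    (fun t => (hθ.comp measurable_prodMk_left).comap_le) hξc hξm
    (g := fun A t x => (K (t, θ t x)).real A) (fun A hA => ?_) fun t A hA => hcond t A (hξm A hA)
  exact (K.measurable_coe (hξm A hA)).ennreal_toReal.comp (measurable_fst.prodMk hθ)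

end Comap

variable (m κ) in
/-- Sufficiency of the σ-algebra `m` for the family of measures `κ t`, in the sense of statistics:
conditional probabilities given `m` have a version that serves all `t` simultaneously. -/
def IsSufficient : Prop :=
  ∀ A, MeasurableSet A → ∃ g : X → ℝ, StronglyMeasurable[m] g ∧ ∀ t, (κ t)⟦A | m⟧ =ᵐ[κ t] g

namespace IsSufficient

variable [IsFiniteKernel κ] {ξ : Set (Set X)}

theorem exists_condExp_ae_eq (h : IsSufficient m κ) (hm : m ≤ mX) (μ : Measure T)
    [IsFiniteMeasure μ] {A : Set X} (hA : MeasurableSet A) :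
    ∃ g : X → ℝ, Measurable g ∧ (∀ t, (κ t)⟦A | m⟧ =ᵐ[κ t] g) ∧ (κ ∘ₘ μ)⟦A | m⟧ =ᵐ[κ ∘ₘ μ] g := by
  obtain ⟨g, hg, hgκ⟩ := h A hA
  exact ⟨g, (hg.mono hm).measurable, hgκ, condExp_comp_ae_eq κ μ hm
    ((integrable_const 1).indicator hA) hg (.of_forall hgκ)⟩

theorem measurable_condEnt [Countable ι] (h : IsSufficient m κ) (hm : m ≤ mX) {α : ι → Set X}
    (hα : ∀ i, MeasurableSet (α i)) : Measurable fun t => condEnt m (κ t) α := by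
  choose g hg hgκ using fun i => h (α i) (hα i)
  exact measurable_condEnt_of_condExp_ae_eq (g := fun i _ => g i)
    (fun i => ((hg i).mono hm).measurable.comp measurable_snd) fun t i => hgκ i t

theorem condEnt_comp [Countable ι] (h : IsSufficient m κ) (hm : m ≤ mX) (μ : Measure T)
    [IsFiniteMeasure μ] {α : ι → Set X} (hα : ∀ i, MeasurableSet (α i)) :
    condEnt m (κ ∘ₘ μ) α = ∫⁻ t, condEnt m (κ t) α ∂μ := by
  choose g hg hgκ hgμ using fun i => h.exists_condExp_ae_eq hm μ (hα i)
  simp only [condEnt_eq_lintegral_of_condExp_ae_eq hgμ,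
    fun t => condEnt_eq_lintegral_of_condExp_ae_eq fun i => hgκ i t]
  exact Measure.lintegral_bind κ.aemeasurable (measurable_tsum_ofReal_negMulLog hg).aemeasurable

theorem measurableSet_setOf_subsetMod (h : IsSufficient m κ) (hm : m ≤ mX) (hξc : ξ.Countable)
    (hξm : ∀ A ∈ ξ, MeasurableSet A) : MeasurableSet {t | SubsetMod m (κ t) ξ} := by
  choose! g hg hgκ using h
  exact measurableSet_setOf_subsetMod_of_condExp_ae_eq (fun _ => hm) hξc hξm
    (g := fun A _ => g A) (fun A hA => ((hg A (hξm A hA)).mono hm).measurable.comp measurable_snd)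
    fun t A hA => hgκ A (hξm A hA) t

theorem subsetMod_comp_iff (h : IsSufficient m κ) (hm : m ≤ mX) (μ : Measure T)
    [IsFiniteMeasure μ] (hξc : ξ.Countable) (hξm : ∀ A ∈ ξ, MeasurableSet A) :
    SubsetMod m (κ ∘ₘ μ) ξ ↔ ∀ᵐ t ∂μ, SubsetMod m (κ t) ξ := by
  simp only [subsetMod_iff_condExp_ae_eq hm, ae_ball_iff hξc]
  refine forall₂_congr fun A hA => ?_
  obtain ⟨g, hg, hgκ, hgμ⟩ := h.exists_condExp_ae_eq hm μ (hξm A hA)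
  have hind : Measurable (A.indicator fun _ => (1 : ℝ)) := measurable_const.indicator (hξm A hA)
  calc (κ ∘ₘ μ)⟦A | m⟧ =ᵐ[κ ∘ₘ μ] A.indicator (fun _ => 1)
      ↔ g =ᵐ[κ ∘ₘ μ] A.indicator fun _ => 1 := ⟨hgμ.symm.trans, hgμ.trans⟩
    _ ↔ ∀ᵐ t ∂μ, g =ᵐ[κ t] A.indicator fun _ => 1 :=
      Measure.ae_comp_iff (measurableSet_eq_fun hg hind)
    _ ↔ ∀ᵐ t ∂μ, (κ t)⟦A | m⟧ =ᵐ[κ t] A.indicator fun _ => 1 :=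
      Filter.eventually_congr (.of_forall fun t => ⟨(hgκ t).trans, (hgκ t).symm.trans⟩)

theorem iInf_subsetMod_condEnt_comp [Countable ι] (h : IsSufficient m κ) (hm : m ≤ mX)
    (h' : IsSufficient m' κ) (hm' : m' ≤ mX) (μ : Measure T) [IsFiniteMeasure μ]
    (hξc : ξ.Countable) (hξm : ∀ A ∈ ξ, MeasurableSet A) {α : ι → Set X}
    (hα : ∀ i, MeasurableSet (α i)) :
    ⨅ _ : SubsetMod m (κ ∘ₘ μ) ξ, condEnt m' (κ ∘ₘ μ) α =
      ∫⁻ t, ⨅ _ : SubsetMod m (κ t) ξ, condEnt m' (κ t) α ∂μ := by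
  rw [lintegral_iInf_prop (h.measurableSet_setOf_subsetMod hm hξc hξm)
    (h'.measurable_condEnt hm' hα), h'.condEnt_comp hm' μ hα]
  exact iInf_congr_Prop (h.subsetMod_comp_iff hm μ hξc hξm) fun _ => rfl

end IsSufficient

theorem isSufficient_comap {S Γ : Type*} [MeasurableSpace S] [StandardBorelSpace X] [Nonempty X]
    [mΓ : MeasurableSpace Γ] [MeasurableSpace.CountablyGenerated Γ] [IsFiniteKernel κ]
    {φ : X → Γ} {k : S → T} (hk : Measurable k) {r : X → T} (hr : Measurable[m] r)
    (hφm : mΓ.comap φ ≤ m) (hm : m ≤ mX) (hrk : ∀ s, ∀ᵐ x ∂κ (k s), r x = k s)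
    (hnull : ∀ s, m ≤ eventuallyMeasurableSpace (mΓ.comap φ) (ae (κ (k s)))) :
    IsSufficient m (κ.comap k hk) := by
  have hφ : Measurable[m] φ := measurable_iff_comap_le.2 hφm
  obtain ⟨K, _, hcond⟩ := exists_kernel_forall_condExp_ae_eq κ (θ := fun _ => φ)
    ((hφ.mono hm le_rfl).comp measurable_snd)
  refine fun A hA => ⟨fun x => (K (r x, φ x)).real A, ?_, fun s => ?_⟩
  · exact ((K.measurable_coe hA).ennreal_toReal.comp (hr.prodMk hφ)).stronglyMeasurable
  · refine (condExp_ae_eq_of_le_eventuallyMeasurableSpace hφm hm (hnull s)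
      ((integrable_const 1).indicator hA)).trans ((hcond (k s) A hA).trans ?_)
    filter_upwards [hrk s] with x hx
    rw [hx]

end ConditionalEntropy

section PartitionCost

open ProbabilityTheory

variable {G X : Type*}

theorem CountablyGen.exists_comap_eq {F : MeasurableSpace X} (hF : CountablyGen F) :
    ∃ φ : X → ℕ → Prop, MeasurableSpace.comap φ inferInstance = F := by
  obtain ⟨S, hS, rfl⟩ := hF
  obtain ⟨a, ha⟩ := (hS.insert ∅).exists_eq_range (insert_nonempty ∅ S)
  refine ⟨fun x n => x ∈ a n, ?_⟩
  rw [← MeasurableSpace.generateFrom_insert_empty, ha]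
  refine le_antisymm ?_ (MeasurableSpace.generateFrom_le ?_)
  · let _ := MeasurableSpace.generateFrom (range a)
    refine (measurable_pi_lambda _ fun n => measurableSet_setOfPred.1 ?_).comap_le
    exact MeasurableSpace.measurableSet_generateFrom (mem_range_self n)
  · rintro _ ⟨n, rfl⟩
    exact ⟨{p | p n}, measurableSet_setOfPred.2 (measurable_pi_apply n), rfl⟩

theorem sigmaG_range_fibres_sup_comap [Group G] [MulAction G X] {Γ : Type*}
    [mΓ : MeasurableSpace Γ] (f : X → ℕ) (φ : X → Γ) :
    sigmaG G (range fun i => f ⁻¹' {i}) ⊔ mΓ.comap φ =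
      MeasurableSpace.comap (fun x => (φ x, fun g : G => f (g • x))) inferInstance := by
  refine le_antisymm (sup_le (MeasurableSpace.generateFrom_le ?_) ?_) ?_
  · rintro _ ⟨g, _, ⟨i, rfl⟩, rfl⟩
    have hg : Measurable fun q : Γ × (G → ℕ) => q.2 g := by fun_prop
    exact ⟨_, hg (measurableSet_singleton i), rfl⟩
  · rintro _ ⟨A, hA, rfl⟩
    exact ⟨Prod.fst ⁻¹' A, measurable_fst hA, rfl⟩
  · let m := sigmaG G (range fun i => f ⁻¹' {i}) ⊔ mΓ.comap φ
    have hφ : Measurable[m] φ := measurable_iff_comap_le.2 le_sup_right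
    have hf : ∀ g : G, Measurable[m] fun x => f (g • x) := fun g =>
      measurable_to_countable' fun i => (le_sup_left : _ ≤ m) _
        (MeasurableSpace.measurableSet_generateFrom ⟨g, _, ⟨i, rfl⟩, rfl⟩)
    exact (hφ.prodMk (measurable_pi_lambda _ hf)).comap_le

variable {F m m' : MeasurableSpace X} [mX : MeasurableSpace X] {ν : Measure X} {ξ : Set (Set X)}

theorem isPartition_iff_exists_fibres {α : ℕ → Set X} :
    IsPartition α ↔ ∃ f : X → ℕ, Measurable f ∧ α = fun i => f ⁻¹' {i} := by
  constructor
  · rintro ⟨hmeas, hdisj, hcover⟩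
    choose f hf using iUnion_eq_univ_iff.1 hcover
    have hα : α = fun i => f ⁻¹' {i} := by
      ext i x
      exact ⟨fun hx => hdisj.eq (not_disjoint_iff.2 ⟨x, hf x, hx⟩), fun hx => hx ▸ hf x⟩
    exact ⟨f, measurable_to_countable' fun i => congrFun hα i ▸ hmeas i, hα⟩
  · rintro ⟨f, hf, rfl⟩
    exact ⟨fun i => hf (measurableSet_singleton i), pairwise_disjoint_fiber f,
      iUnion_eq_univ_iff.2 fun x => ⟨f x, rfl⟩⟩

theorem condEnt_fibres_congr {ι : Type*} [Countable ι] {f f' : X → ι} (h : f =ᵐ[ν] f') :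
    condEnt F ν (fun i => f ⁻¹' {i}) = condEnt F ν fun i => f' ⁻¹' {i} := by
  refine condEnt_eq_lintegral_of_condExp_ae_eq fun i => condExp_congr_ae ?_
  exact indicator_ae_eq_of_ae_eq_set (h.preimage {i})

theorem condEnt_eq_of_le_eventuallyMeasurableSpace {ι : Type*} [Countable ι] [IsFiniteMeasure ν]
    (hmm' : m ≤ m') (hm' : m' ≤ mX) (hnull : m' ≤ eventuallyMeasurableSpace m (ae ν))
    {α : ι → Set X} (hα : ∀ i, MeasurableSet (α i)) : condEnt m' ν α = condEnt m ν α :=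
  condEnt_eq_lintegral_of_condExp_ae_eq fun i =>
    condExp_ae_eq_of_le_eventuallyMeasurableSpace hmm' hm' hnull
      ((integrable_const 1).indicator (hα i))

theorem SubsetMod.of_le_eventuallyMeasurableSpace (h : SubsetMod m' ν ξ)
    (hnull : m' ≤ eventuallyMeasurableSpace m (ae ν)) : SubsetMod m ν ξ := by
  intro A hA
  obtain ⟨B, hB, hAB⟩ := h A hA
  obtain ⟨C, hC, hBC⟩ := hnull B hB
  exact ⟨C, hC, measure_symmDiff_eq_zero_iff.2 ((measure_symmDiff_eq_zero_iff.1 hAB).trans hBC)⟩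

variable [Group G] [MulAction G X]

theorem invSigma_le : invSigma G X ≤ mX :=
  MeasurableSpace.generateFrom_le fun _ h => h.1

variable (m) in
theorem IsErgodicInv.sup_invSigma_le_eventuallyMeasurableSpace [IsProbabilityMeasure ν]
    (hν : IsErgodicInv G ν) :
    m ⊔ invSigma G X ≤ eventuallyMeasurableSpace m (ae ν) := by
  refine sup_le le_eventuallyMeasurableSpace (MeasurableSpace.generateFrom_le ?_)
  rintro A ⟨hA, hinv⟩
  rcases hν A hA hinv with h | h
  · exact ⟨∅, m.measurableSet_empty, ae_eq_empty.2 h⟩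
  · exact ⟨univ, @MeasurableSet.univ X m, ae_eq_univ.2 ((prob_compl_eq_zero_iff hA).2 h)⟩

variable (m) in
theorem IsPmp.sigmaG_fibres_sup_le_eventuallyMeasurableSpace (hν : IsPmp G ν) {f f' : X → ℕ}
    (h : f =ᵐ[ν] f') :
    sigmaG G (range fun i => f ⁻¹' {i}) ⊔ m ≤
      eventuallyMeasurableSpace (sigmaG G (range fun i => f' ⁻¹' {i}) ⊔ m) (ae ν) := by
  refine sup_le (MeasurableSpace.generateFrom_le ?_) (le_sup_right.trans
    le_eventuallyMeasurableSpace)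
  rintro _ ⟨g, _, ⟨i, rfl⟩, rfl⟩
  refine ⟨(fun x => g • x) ⁻¹' (f' ⁻¹' {i}), (le_sup_left : _ ≤ _ ⊔ m) _
    (MeasurableSpace.measurableSet_generateFrom ⟨g, _, ⟨i, rfl⟩, rfl⟩), ?_⟩
  exact (hν g).quasiMeasurePreserving.preimage_ae_eq (h.preimage {i})

/-- The entropy `H_ν(α | F)` of the partition `α` into the fibres of `f` if `α` and `F` generate
`ξ` under the action of `G` modulo `ν`, and `∞` otherwise. Its infimum over `f` is an outer Rokhlin
entropy. -/
noncomputable def partitionCost (G : Type*) {X : Type*} [Group G] [MulAction G X]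
    (ξ : Set (Set X)) (F : MeasurableSpace X) [MeasurableSpace X] (ν : Measure X)
    (f : X → ℕ) : ℝ≥0∞ :=
  ⨅ _ : SubsetMod (sigmaG G (range fun i => f ⁻¹' {i}) ⊔ F) ν ξ, condEnt F ν fun i => f ⁻¹' {i}

theorem outerRokhlin_eq_iInf_partitionCost : outerRokhlin G ξ F ν =
    ⨅ f : X → ℕ, ⨅ _ : Measurable f, partitionCost G ξ (F ⊔ invSigma G X) ν f := by
  simp only [outerRokhlin, partitionCost, isPartition_iff_exists_fibres, sup_assoc]
  refine le_antisymm ?_ (le_sInf ?_)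
  · exact le_iInf fun f => le_iInf₂ fun hf hξ => sInf_le ⟨_, ⟨f, hf, rfl⟩, hξ, rfl⟩
  · rintro _ ⟨_, ⟨f, hf, rfl⟩, hξ, rfl⟩
    exact iInf_le_of_le f (iInf₂_le hf hξ)

theorem IsErgodicInv.partitionCost_sup_invSigma [IsProbabilityMeasure ν] (hν : IsErgodicInv G ν)
    (hF : F ≤ mX) {f : X → ℕ} (hf : Measurable f) :
    partitionCost G ξ (F ⊔ invSigma G X) ν f = partitionCost G ξ F ν f := by
  have hent := condEnt_eq_of_le_eventuallyMeasurableSpace le_sup_left (sup_le hF invSigma_le)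
    (hν.sup_invSigma_le_eventuallyMeasurableSpace F)
    fun i => hf (measurableSet_singleton i)
  rw [partitionCost, partitionCost, hent, ← sup_assoc]
  refine iInf_congr_Prop ⟨fun h => ?_, fun h => ?_⟩ fun _ => rfl
  · exact h.of_le_eventuallyMeasurableSpace (hν.sup_invSigma_le_eventuallyMeasurableSpace _)
  · exact h.of_le_eventuallyMeasurableSpace (le_sup_left.trans le_eventuallyMeasurableSpace)

theorem IsPmp.partitionCost_congr (hν : IsPmp G ν) {f f' : X → ℕ} (h : f =ᵐ[ν] f') :
    partitionCost G ξ F ν f = partitionCost G ξ F ν f' := by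
  rw [partitionCost, partitionCost, condEnt_fibres_congr h]
  refine iInf_congr_Prop ⟨fun hξ => ?_, fun hξ => ?_⟩ fun _ => rfl
  · exact hξ.of_le_eventuallyMeasurableSpace (hν.sigmaG_fibres_sup_le_eventuallyMeasurableSpace F h)
  · exact hξ.of_le_eventuallyMeasurableSpace
      (hν.sigmaG_fibres_sup_le_eventuallyMeasurableSpace F h.symm)

theorem measurable_partitionCost [Countable G] [MeasurableConstSMul G X] [StandardBorelSpace X]
    [Nonempty X] {T Γ : Type*} [MeasurableSpace T] {κ : Kernel T X} [IsFiniteKernel κ]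
    [mΓ : MeasurableSpace Γ] [MeasurableSpace.CountablyGenerated Γ] {φ : X → Γ}
    (hφ : Measurable φ) (hξc : ξ.Countable) (hξm : ∀ A ∈ ξ, MeasurableSet A) {f : T → X → ℕ}
    (hf : Measurable (uncurry f)) :
    Measurable fun t => partitionCost G ξ (mΓ.comap φ) (κ t) (f t) := by
  have hθ : Measurable (uncurry fun t x => (φ x, fun g : G => f t (g • x))) :=
    (hφ.comp measurable_snd).prodMk <| measurable_pi_lambda _ fun g =>
      hf.comp (measurable_fst.prodMk (measurable_snd.const_smul g))
  simp only [partitionCost, sigmaG_range_fibres_sup_comap]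
  exact measurable_iInf_prop (measurableSet_setOf_subsetMod_comap hθ hξc hξm)
    (measurable_condEnt_comap (θ := fun _ => φ) (hφ.comp measurable_snd) hf)

end PartitionCost

section ErgodicDecomposition

open ProbabilityTheory

variable {G X : Type*} [Group G] [MulAction G X] {F : MeasurableSpace X} [mX : MeasurableSpace X]
  {ξ : Set (Set X)}

theorem measurable_invSigma_of_invariant {Y : Type*} [MeasurableSpace Y] {f : X → Y}
    (hf : Measurable f) (hinv : ∀ (g : G) x, f (g • x) = f x) : Measurable[invSigma G X] f :=
  fun A hA => MeasurableSpace.measurableSet_generateFrom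
    ⟨hf hA, fun g => by ext x; simp only [mem_preimage, hinv]⟩

variable (X) in
/-- The tautological Markov kernel from the space of probability measures on `X` to `X`. Applying
statements about kernels to it yields measurable dependence on the measure. -/
def probabilityMeasureKernel : Kernel (ProbabilityMeasure X) X :=
  ⟨Subtype.val, measurable_subtype_coe⟩

instance : IsMarkovKernel (probabilityMeasureKernel X) :=
  ⟨fun ν => ν.2⟩

theorem measurable_uncurry_partitionCost [Countable G] [MeasurableConstSMul G X]
    [StandardBorelSpace X] [Nonempty X] (hF : F ≤ mX) (hFcg : CountablyGen F) (hξc : ξ.Countable)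
    (hξm : ∀ A ∈ ξ, MeasurableSet A) {P : Type*} [MeasurableSpace P] {c : P → X → ℕ}
    (hc : Measurable (uncurry c)) :
    Measurable (uncurry fun (ν : ProbabilityMeasure X) p => partitionCost G ξ F ν (c p)) := by
  obtain ⟨φ, rfl⟩ := hFcg.exists_comap_eq
  exact measurable_partitionCost (κ := (probabilityMeasureKernel X).comap Prod.fst measurable_fst)
    (f := fun q : ProbabilityMeasure X × P => c q.2) (measurable_iff_comap_le.2 hF) hξc hξm
    (hc.comp ((measurable_snd.comp measurable_fst).prodMk measurable_snd))

variable {ν : Measure X} [IsProbabilityMeasure ν]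

theorem outerRokhlin_le_partitionCost (herg : IsErgodicInv G ν) (hF : F ≤ mX) {f : X → ℕ}
    (hf : Measurable f) : outerRokhlin G ξ F ν ≤ partitionCost G ξ F ν f := by
  rw [outerRokhlin_eq_iInf_partitionCost, ← herg.partitionCost_sup_invSigma hF hf]
  exact iInf₂_le f hf

theorem outerRokhlin_eq_iInf_of_forall_exists_ae_eq (hpmp : IsPmp G ν) (herg : IsErgodicInv G ν)
    (hF : F ≤ mX) {P : Type*} {c : P → X → ℕ} (hc : ∀ p, Measurable (c p))
    (hcode : ∀ f : X → ℕ, Measurable f → ∃ p, c p =ᵐ[ν] f) :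
    outerRokhlin G ξ F ν = ⨅ p, partitionCost G ξ F ν (c p) := by
  refine le_antisymm (le_iInf fun p => outerRokhlin_le_partitionCost herg hF (hc p)) ?_
  rw [outerRokhlin_eq_iInf_partitionCost]
  refine le_iInf₂ fun f hf => ?_
  obtain ⟨p, hp⟩ := hcode f hf
  rw [herg.partitionCost_sup_invSigma hF hf, ← hpmp.partitionCost_congr hp]
  exact iInf_le _ p

namespace IsErgDecomp

variable {μ : Measure X} {π : X → Measure X}

/-- An ergodic decomposition map, as a map into the space of probability measures. -/
def toProbabilityMeasure (hπ : IsErgDecomp G μ π) (x : X) : ProbabilityMeasure X :=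
  ⟨π x, (hπ.2.1 x).1⟩

theorem measurable_toProbabilityMeasure (hπ : IsErgDecomp G μ π) :
    Measurable hπ.toProbabilityMeasure :=
  hπ.1.subtype_mk

/-- An ergodic decomposition map, as a Markov kernel. -/
noncomputable def kernel (hπ : IsErgDecomp G μ π) : Kernel X X :=
  (probabilityMeasureKernel X).comap hπ.toProbabilityMeasure hπ.measurable_toProbabilityMeasure

instance (hπ : IsErgDecomp G μ π) : IsMarkovKernel hπ.kernel :=
  inferInstanceAs (IsMarkovKernel (Kernel.comap _ _ _))

theorem comp_kernel (hπ : IsErgDecomp G μ π) : hπ.kernel ∘ₘ μ = μ := by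
  ext B hB
  rw [Measure.bind_apply hB hπ.kernel.aemeasurable]
  exact (hπ.2.2.2.2 B hB).symm

theorem ae_toProbabilityMeasure_eq [MeasurableSpace.CountablyGenerated X]
    (hπ : IsErgDecomp G μ π) (x : X) :
    ∀ᵐ y ∂π x, hπ.toProbabilityMeasure y = hπ.toProbabilityMeasure x := by
  obtain ⟨hprob, hpmp, herg⟩ := hπ.2.1 x
  have := MeasurableSpace.measurableSingletonClass_of_countablySeparated (α := ProbabilityMeasure X)
  have hmeas : MeasurableSet {y | hπ.toProbabilityMeasure y = hπ.toProbabilityMeasure x} :=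
    hπ.measurable_toProbabilityMeasure (measurableSet_singleton _)
  have hcoe : {y | hπ.toProbabilityMeasure y = hπ.toProbabilityMeasure x} = {y | π y = π x} :=
    Set.ext fun _ => Subtype.ext_iff
  exact (prob_compl_eq_zero_iff hmeas).2 (hcoe ▸ hπ.2.2.2.1 (π x) hprob hpmp herg)

theorem measurableConstSMul [Nonempty X] (hπ : IsErgDecomp G μ π) : MeasurableConstSMul G X :=
  ⟨fun g => ((hπ.2.1 (Classical.arbitrary X)).2.1 g).measurable⟩

theorem outerRokhlin_eq_iInf (hπ : IsErgDecomp G μ π) (hF : F ≤ mX) {P : Type*}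
    {c : P → X → ℕ} (hc : ∀ p, Measurable (c p))
    (hcode : ∀ (ν : Measure X) [IsFiniteMeasure ν] (f : X → ℕ), Measurable f → ∃ p, c p =ᵐ[ν] f)
    (x : X) :
    outerRokhlin G ξ F (π x) = ⨅ p, partitionCost G ξ F (hπ.toProbabilityMeasure x) (c p) :=
  have := (hπ.2.1 x).1
  outerRokhlin_eq_iInf_of_forall_exists_ae_eq (hπ.2.1 x).2.1 (hπ.2.1 x).2.2 hF hc (hcode (π x))

variable [StandardBorelSpace X]

theorem isSufficient [Nonempty X] (hπ : IsErgDecomp G μ π) {Γ : Type*} [mΓ : MeasurableSpace Γ]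
    [MeasurableSpace.CountablyGenerated Γ] {φ : X → Γ} (hφ : Measurable φ) :
    IsSufficient (mΓ.comap φ ⊔ invSigma G X) hπ.kernel := by
  have hr : Measurable[invSigma G X] hπ.toProbabilityMeasure :=
    measurable_invSigma_of_invariant hπ.measurable_toProbabilityMeasure fun g x =>
      Subtype.ext (hπ.2.2.1 g x)
  refine isSufficient_comap hπ.measurable_toProbabilityMeasure (hr.mono le_sup_right le_rfl)
    le_sup_left (sup_le hφ.comap_le invSigma_le) hπ.ae_toProbabilityMeasure_eq fun x => ?_
  have := (hπ.2.1 x).1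
  exact (hπ.2.1 x).2.2.sup_invSigma_le_eventuallyMeasurableSpace _

variable [Countable G] [IsProbabilityMeasure μ]

theorem partitionCost_eq_lintegral (hπ : IsErgDecomp G μ π) (hF : F ≤ mX) (hFcg : CountablyGen F)
    (hξc : ξ.Countable) (hξm : ∀ A ∈ ξ, MeasurableSet A) {f : X → ℕ} (hf : Measurable f) :
    partitionCost G ξ (F ⊔ invSigma G X) μ f = ∫⁻ x, partitionCost G ξ F (π x) f ∂μ := by
  have := μ.nonempty_of_neZero
  have := hπ.measurableConstSMul
  obtain ⟨φ, rfl⟩ := hFcg.exists_comap_eq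
  have hφ : Measurable φ := measurable_iff_comap_le.2 hF
  have hθ : Measurable fun x => (φ x, fun g : G => f (g • x)) :=
    hφ.prodMk (measurable_pi_lambda _ fun g => hf.comp (measurable_const_smul g))
  have hcomp := (hπ.isSufficient hθ).iInf_subsetMod_condEnt_comp
    (sup_le hθ.comap_le invSigma_le) (hπ.isSufficient hφ) (sup_le hF invSigma_le) μ
    hξc hξm fun i => hf (measurableSet_singleton i)
  rw [hπ.comp_kernel, ← sigmaG_range_fibres_sup_comap, sup_assoc] at hcomp
  refine hcomp.trans (lintegral_congr fun x => ?_)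
  have := (hπ.2.1 x).1
  exact (hπ.2.1 x).2.2.partitionCost_sup_invSigma hF hf

theorem aemeasurable_outerRokhlin (hπ : IsErgDecomp G μ π) (hF : F ≤ mX) (hFcg : CountablyGen F)
    (hξc : ξ.Countable) (hξm : ∀ A ∈ ξ, MeasurableSet A) :
    AEMeasurable (outerRokhlin G ξ F) (μ.map π) := by
  have := μ.nonempty_of_neZero
  have := hπ.measurableConstSMul
  obtain ⟨c, hc, hcode⟩ := exists_measurable_uncurry_forall_exists_ae_eq X ℕ
  have hk := hπ.measurable_toProbabilityMeasure
  have hcoe : MeasurableEmbedding ((↑) : ProbabilityMeasure X → Measure X) :=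
    .subtype_coe ProbabilityMeasure.measurableSet_isProbabilityMeasure
  rw [show π = (↑) ∘ hπ.toProbabilityMeasure from rfl, ← Measure.map_map hcoe.measurable hk,
    hcoe.aemeasurable_map_iff]
  refine (aemeasurable_iInf_of_measurable_uncurry hk
    (measurable_uncurry_partitionCost (G := G) hF hFcg hξc hξm hc) μ).congr ?_
  filter_upwards [ae_map_mem_range_of_measurable hk μ] with t ⟨x, hx⟩
  rw [← hx]
  exact (hπ.outerRokhlin_eq_iInf hF (fun p => hc.comp measurable_prodMk_left) hcode x).symm

theorem lintegral_outerRokhlin_le (hπ : IsErgDecomp G μ π) (hF : F ≤ mX) (hFcg : CountablyGen F)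
    (hξc : ξ.Countable) (hξm : ∀ A ∈ ξ, MeasurableSet A) :
    ∫⁻ x, outerRokhlin G ξ F (π x) ∂μ ≤ outerRokhlin G ξ F μ := by
  rw [outerRokhlin_eq_iInf_partitionCost (ν := μ)]
  refine le_iInf₂ fun f hf => ?_
  rw [hπ.partitionCost_eq_lintegral hF hFcg hξc hξm hf]
  refine lintegral_mono fun x => ?_
  have := (hπ.2.1 x).1
  exact outerRokhlin_le_partitionCost (hπ.2.1 x).2.2 hF hf

theorem exists_measurable_partitionCost_le_add (hπ : IsErgDecomp G μ π) (hF : F ≤ mX)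
    (hFcg : CountablyGen F) (hξc : ξ.Countable) (hξm : ∀ A ∈ ξ, MeasurableSet A) {ε : ℝ≥0∞}
    (hε : ε ≠ 0) : ∃ f : X → ℕ, Measurable f ∧
      ∀ᵐ x ∂μ, partitionCost G ξ F (π x) f ≤ outerRokhlin G ξ F (π x) + ε := by
  have := μ.nonempty_of_neZero
  have := hπ.measurableConstSMul
  obtain ⟨c, hc, hcode⟩ := exists_measurable_uncurry_forall_exists_ae_eq X ℕ
  have hk := hπ.measurable_toProbabilityMeasure
  obtain ⟨s, hs, hsε⟩ := exists_measurable_ae_le_iInf_add hk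
    (measurable_uncurry_partitionCost (G := G) hF hFcg hξc hξm hc) μ hε
  let f : X → ℕ := fun x => c (s (hπ.toProbabilityMeasure x)) x
  have hfc : ∀ x, f =ᵐ[π x] c (s (hπ.toProbabilityMeasure x)) := fun x => by
    filter_upwards [hπ.ae_toProbabilityMeasure_eq x] with y hy
    simp only [f, hy]
  refine ⟨f, hc.comp ((hs.comp hk).prodMk measurable_id), ?_⟩
  filter_upwards [ae_of_ae_map hk.aemeasurable hsε] with x hx
  rwa [(hπ.2.1 x).2.1.partitionCost_congr (hfc x),
    hπ.outerRokhlin_eq_iInf hF (fun p => hc.comp measurable_prodMk_left) hcode]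

theorem outerRokhlin_eq_lintegral (hπ : IsErgDecomp G μ π) (hF : F ≤ mX) (hFcg : CountablyGen F)
    (hξc : ξ.Countable) (hξm : ∀ A ∈ ξ, MeasurableSet A) :
    outerRokhlin G ξ F μ = ∫⁻ x, outerRokhlin G ξ F (π x) ∂μ := by
  refine le_antisymm (ENNReal.le_of_forall_pos_le_add fun ε hε _ => ?_)
    (hπ.lintegral_outerRokhlin_le hF hFcg hξc hξm)
  obtain ⟨f, hf, hfε⟩ := hπ.exists_measurable_partitionCost_le_add hF hFcg hξc hξm
    (ENNReal.coe_ne_zero.2 hε.ne')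
  calc outerRokhlin G ξ F μ ≤ partitionCost G ξ (F ⊔ invSigma G X) μ f :=
        outerRokhlin_eq_iInf_partitionCost.trans_le (iInf₂_le f hf)
    _ = ∫⁻ x, partitionCost G ξ F (π x) f ∂μ :=
      hπ.partitionCost_eq_lintegral hF hFcg hξc hξm hf
    _ ≤ ∫⁻ x, (outerRokhlin G ξ F (π x) + ε) ∂μ := lintegral_mono_ae hfε
    _ = ∫⁻ x, outerRokhlin G ξ F (π x) ∂μ + ε := by
      rw [lintegral_add_right _ measurable_const, lintegral_const, measure_univ, mul_one]

end IsErgDecomp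

end ErgodicDecomposition

theorem statement8_general {G X : Type*} (F : MeasurableSpace X) [Group G] [Countable G]
    [mX : MeasurableSpace X] [StandardBorelSpace X] [MulAction G X]
    (μ : Measure X) [IsProbabilityMeasure μ]
    (ξ : Set (Set X)) (hξc : ξ.Countable) (hξm : ∀ A ∈ ξ, MeasurableSet A)
    (hF : F ≤ mX) (hFcg : CountablyGen F)
    (π : X → Measure X) (hπ : IsErgDecomp G μ π) :
    ∃ h : Measure X → ℝ≥0∞, Measurable h ∧
      (∀ᵐ ν ∂(μ.map π), h ν = outerRokhlin G ξ F ν) ∧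
      outerRokhlin G ξ F μ = ∫⁻ ν, h ν ∂(μ.map π) := by
  have hmeas := hπ.aemeasurable_outerRokhlin hF hFcg hξc hξm
  refine ⟨hmeas.mk _, hmeas.measurable_mk, hmeas.ae_eq_mk.symm, ?_⟩
  rw [← lintegral_congr_ae hmeas.ae_eq_mk, lintegral_map' hmeas hπ.1.aemeasurable]
  exact hπ.outerRokhlin_eq_lintegral hF hFcg hξc hξm

/-- Corollary 4.5, ergodic decomposition formula: the outer Rokhlin
entropy is the integral over the ergodic decomposition of the outer Rokhlin entropies of
the ergodic components. -/
theorem statement8 {G X : Type*} (F : MeasurableSpace X) [Group G] [Countable G]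
    [mX : MeasurableSpace X] [StandardBorelSpace X] [MulAction G X]
    (μ : Measure X) [IsProbabilityMeasure μ] (hpmp : IsPmp G μ)
    (ξ : Set (Set X)) (hξc : ξ.Countable) (hξm : ∀ A ∈ ξ, MeasurableSet A)
    (hF : F ≤ mX) (hFinv : InvariantAlg G F) (hFcg : CountablyGen F)
    (π : X → Measure X) (hπ : IsErgDecomp G μ π) :
    ∃ h : Measure X → ℝ≥0∞, Measurable h ∧
      (∀ᵐ ν ∂(μ.map π), h ν = outerRokhlin G ξ F ν) ∧
      outerRokhlin G ξ F μ = ∫⁻ ν, h ν ∂(μ.map π) :=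
  statement8_general F μ ξ hξc hξm hF hFcg π hπ
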